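/- Let p be a prime and G a finite p-group of order p^n with |G'| = p and |M(G)| = p^{(n-1)(n-2)/2 - 1}. Then the center Z(G) has exponent at most p^2 (every central element z satisfies z^{p^2} = 1). -/

import Mathlib

/-- The kernel of the canonical free presentation `FreeGroup G → G`. -/
def presentationKernel (G : Type u) [Group G] : Subgroup (FreeGroup G) :=
  (FreeGroup.lift (id : G → G)).ker

/-- The Schur multiplier `M(G) = H₂(G, ℤ)` (second integral group homology) of a
group `G`, realised via Hopf's integral formula `H₂(G, ℤ) ≅ (R ⊓ [F, F]) / [F, R]`,
where `F = FreeGroup G` is the canonical free group surjecting onto `G` with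
kernel `R`. -/
def SchurMultiplier (G : Type u) [Group G] : Type u :=
  ↥(presentationKernel G ⊓ commutator (FreeGroup G)) ⧸
    (⁅(⊤ : Subgroup (FreeGroup G)), presentationKernel G⁆.subgroupOf
      (presentationKernel G ⊓ commutator (FreeGroup G)))

/-- A finite `p`-group `H` is extraspecial if its center, derived subgroup and
Frattini subgroup coincide and have order `p`. -/
def IsExtraspecial (p : ℕ) (H : Type*) [Group H] : Prop :=
  Subgroup.center H = commutator H ∧ Subgroup.center H = frattini H ∧
    Nat.card (Subgroup.center H) = p

/-!
Let `F = FreeGroup G` and let `R` be the kernel of `F → G`. The central extension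
`E = F ⧸ ⁅F, R⁆` of `G` satisfies `|E'| = |M(G)| * |G'|`, so a lower bound for `|M(G)|` is a lower
bound for `|E'|`.

In the other direction, suppose `u : E` is central modulo `Z(E)`. Then `g ↦ ⁅g, u⁆` is a
homomorphism into `Z(E)` that vanishes on `⟨u⟩ Z(E)`. Its image has order dividing the index
of `⟨u⟩ Z(E)`, and dividing `E` by that image makes `⟨u⟩ Z(E)` central. By induction, `|E'|`
divides `p ^ ((m + 1).choose 2)` as soon as `⟨u⟩ Z(E)` has index dividing `p ^ m`. A lift `u` to `E`
of a central element of `G` of large order makes `m` small, contradicting the lower bound.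
-/

open Subgroup hiding commutator
open scoped commutatorElement

section CommutatorIndex

variable {G H : Type*} [Group G] [Group H]

theorem quotient_mk_mem_center_iff {N : Subgroup G} [N.Normal] {a : G} :
    (a : G ⧸ N) ∈ center (G ⧸ N) ↔ ∀ g : G, ⁅g, a⁆ ∈ N := by
  rw [mem_center_iff, QuotientGroup.mk_surjective.forall]
  refine forall_congr' fun g ↦ ?_
  rw [← commutatorElement_eq_one_iff_mul_comm, ← QuotientGroup.eq_one_iff]
  rfl

theorem ker_relIndex_commutator {f : G →* H} (hf : Function.Surjective f) :
    f.ker.relIndex (commutator G) = Nat.card (commutator H) := by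
  rw [relIndex_ker, map_commutator_eq, MonoidHom.range_eq_top.mpr hf, commutator_def]

theorem relIndex_commutator_eq_card_commutator_quotient (N : Subgroup G) [N.Normal] :
    N.relIndex (commutator G) = Nat.card (commutator (G ⧸ N)) := by
  rw [← ker_relIndex_commutator (QuotientGroup.mk'_surjective N), QuotientGroup.ker_mk']

theorem card_commutator_dvd_card_mul_card_commutator_quotient (N : Subgroup G) [N.Normal] :
    Nat.card (commutator G) ∣ Nat.card N * Nat.card (commutator (G ⧸ N)) := by
  have hcard : Nat.card (N ⊓ commutator G : Subgroup G) * Nat.card (commutator (G ⧸ N)) =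
      Nat.card (commutator G) := by
    rw [← relIndex_commutator_eq_card_commutator_quotient, ← inf_relIndex_right,
      ← relIndex_bot_left, relIndex_mul_relIndex _ _ _ bot_le inf_le_right, relIndex_bot_left]
  exact hcard ▸ mul_dvd_mul_right (card_dvd_of_le inf_le_left) _

theorem index_zpowers_sup_ker {f : G →* H} (hf : Function.Surjective f) (u : G) :
    (zpowers u ⊔ f.ker).index = (zpowers (f u)).index := by
  rw [← comap_map_eq, MonoidHom.map_zpowers, index_comap_of_surjective _ hf]

theorem index_zpowers_eq_pow_sub {p j n : ℕ} (hp : 0 < p) {z : G} (hG : Nat.card G = p ^ n)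
    (hz : orderOf z = p ^ j) (hj : j ≤ n) : (zpowers z).index = p ^ (n - j) := by
  refine Nat.eq_of_mul_eq_mul_right (pow_pos hp j) ?_
  rw [pow_sub_mul_pow p hj, ← hG, ← hz, ← Nat.card_zpowers, index_mul_card]

end CommutatorIndex

section SecondCenter

variable {E : Type*} [Group E] {u : E}

/-- The homomorphism `g ↦ ⁅g, u⁆` attached to an element `u` of the second center, that is, an
element all of whose commutators are central. Its image `⁅E, u⁆` is the central subgroup by which
`E` is divided to make `u` central. -/
def commutatorHom (u : E) (hu : ∀ g : E, ⁅g, u⁆ ∈ center E) : E →* E :=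
  MonoidHom.mk' (fun g ↦ ⁅g, u⁆) fun a b ↦ by
    rw [commutatorElement_mul_left_eq_conj_mul, mem_center_iff.mp (hu b) a,
      mul_inv_cancel_right, mem_center_iff.mp (hu a)]

theorem commutatorHom_range_le_center (hu : ∀ g : E, ⁅g, u⁆ ∈ center E) :
    (commutatorHom u hu).range ≤ center E := by
  rintro _ ⟨g, rfl⟩
  exact hu g

instance commutatorHom_range_normal (hu : ∀ g : E, ⁅g, u⁆ ∈ center E) :
    (commutatorHom u hu).range.Normal :=
  have hcomm : ⁅⊤, (commutatorHom u hu).range⁆ = ⊥ :=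
    commutator_top_left_eq_bot_iff_le_center.mpr (commutatorHom_range_le_center hu)
  commutator_top_left_le_iff.mp (hcomm.trans_le bot_le)

theorem zpowers_sup_center_le_commutatorHom_ker (hu : ∀ g : E, ⁅g, u⁆ ∈ center E) :
    zpowers u ⊔ center E ≤ (commutatorHom u hu).ker :=
  sup_le (zpowers_le.mpr (commutatorElement_self u)) fun _ ha ↦
    commutatorElement_eq_one_iff_mul_comm.mpr (mem_center_iff.mp ha u).symm

theorem card_commutatorHom_range_dvd (hu : ∀ g : E, ⁅g, u⁆ ∈ center E) :
    Nat.card (commutatorHom u hu).range ∣ (zpowers u ⊔ center E).index :=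
  index_ker (commutatorHom u hu) ▸
    index_dvd_of_le (zpowers_sup_center_le_commutatorHom_ker hu)

theorem zpowers_sup_center_map_le_center (hu : ∀ g : E, ⁅g, u⁆ ∈ center E) :
    (zpowers u ⊔ center E).map (QuotientGroup.mk' (commutatorHom u hu).range) ≤
      center (E ⧸ (commutatorHom u hu).range) := by
  rw [map_le_iff_le_comap]
  refine sup_le (zpowers_le.mpr ?_) fun a ha ↦ ?_
  · exact quotient_mk_mem_center_iff.mpr fun g ↦ ⟨g, rfl⟩
  · refine quotient_mk_mem_center_iff.mpr fun g ↦ ?_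
    rw [commutatorElement_eq_one_iff_mul_comm.mpr (mem_center_iff.mp ha g)]
    exact one_mem _

theorem index_center_quotient_commutatorHom_range_dvd (hu : ∀ g : E, ⁅g, u⁆ ∈ center E) :
    (center (E ⧸ (commutatorHom u hu).range)).index ∣ (zpowers u ⊔ center E).index :=
  (index_dvd_of_le (zpowers_sup_center_map_le_center hu)).trans
    (index_map_dvd _ (QuotientGroup.mk'_surjective _))

theorem card_commutator_dvd_index_mul (hu : ∀ g : E, ⁅g, u⁆ ∈ center E) :
    Nat.card (commutator E) ∣ (zpowers u ⊔ center E).index *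
      Nat.card (commutator (E ⧸ (commutatorHom u hu).range)) :=
  (card_commutator_dvd_card_mul_card_commutator_quotient _).trans
    (mul_dvd_mul_right (card_commutatorHom_range_dvd hu) _)

end SecondCenter

section PrimePowerIndex

variable {p : ℕ} [Fact p.Prime]

theorem exists_mem_center_orderOf_eq_prime {G : Type*} [Group G] [Finite G] [Nontrivial G]
    (hG : IsPGroup p G) : ∃ z ∈ center G, orderOf z = p := by
  have := hG.center_nontrivial
  have hdvd : p ∣ Nat.card (center G) :=
    (hG.to_subgroup (center G)).card_eq_or_dvd.resolve_left Finite.one_lt_card.ne'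
  obtain ⟨⟨z, hz⟩, hord⟩ := exists_prime_orderOf_dvd_card' p hdvd
  exact ⟨z, hz, by rwa [orderOf_mk] at hord⟩

theorem exists_index_zpowers_sup_center_dvd {E : Type*} [Group E] {n : ℕ}
    (hE : center E ≠ ⊤) (hn : (center E).index ∣ p ^ (n + 1)) :
    ∃ u : E, (∀ g : E, ⁅g, u⁆ ∈ center E) ∧ (zpowers u ⊔ center E).index ∣ p ^ n := by
  have hp : 0 < p := (Fact.out : p.Prime).pos
  have hQ : IsPGroup p (E ⧸ center E) := .of_card_dvd_pow hn
  have : Finite (E ⧸ center E) :=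
    index_ne_zero_iff_finite.mp (ne_zero_of_dvd_ne_zero (pow_pos hp _).ne' hn)
  have : Nontrivial (E ⧸ center E) := QuotientGroup.nontrivial_iff.mpr hE
  obtain ⟨z, hz, hord⟩ := exists_mem_center_orderOf_eq_prime hQ
  obtain ⟨u, rfl⟩ := QuotientGroup.mk_surjective z
  have hindex : (zpowers u ⊔ center E).index * p = (center E).index := by
    have h := index_zpowers_sup_ker (QuotientGroup.mk'_surjective (center E)) u
    rw [QuotientGroup.ker_mk'] at h
    rw [h, index_eq_card (center E), ← index_mul_card (zpowers (u : E ⧸ center E)),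
      Nat.card_zpowers, hord, QuotientGroup.mk'_apply]
  refine ⟨u, quotient_mk_mem_center_iff.mp hz, ?_⟩
  rwa [← hindex, pow_succ, Nat.mul_dvd_mul_iff_right hp] at hn

theorem pow_mul_pow_choose_two (a n : ℕ) : a ^ n * a ^ n.choose 2 = a ^ (n + 1).choose 2 := by
  rw [← pow_add, Nat.choose_succ_succ', Nat.choose_one_right]

/-- Wiegold's bound for the derived subgroup. -/
theorem card_commutator_dvd_of_index_center_dvd {n : ℕ} {E : Type*} [Group E]
    (hn : (center E).index ∣ p ^ n) : Nat.card (commutator E) ∣ p ^ n.choose 2 := by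
  induction n generalizing E with
  | zero =>
    have hE : center E = ⊤ := index_eq_one.mp (Nat.dvd_one.mp hn)
    simp [(commutator_eq_bot_iff_center_eq_top E).mpr hE]
  | succ n ih =>
    by_cases hE : center E = ⊤
    · simp [(commutator_eq_bot_iff_center_eq_top E).mpr hE]
    obtain ⟨u, hu, hindex⟩ := exists_index_zpowers_sup_center_dvd hE hn
    rw [← pow_mul_pow_choose_two]
    exact (card_commutator_dvd_index_mul hu).trans <| mul_dvd_mul hindex <|
      ih ((index_center_quotient_commutatorHom_range_dvd hu).trans hindex)

theorem card_commutator_dvd_of_index_zpowers_sup_center_dvd {m : ℕ} {E : Type*} [Group E] {u : E}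
    (hu : ∀ g : E, ⁅g, u⁆ ∈ center E) (hm : (zpowers u ⊔ center E).index ∣ p ^ m) :
    Nat.card (commutator E) ∣ p ^ (m + 1).choose 2 := by
  rw [← pow_mul_pow_choose_two]
  exact (card_commutator_dvd_index_mul hu).trans <| mul_dvd_mul hm <|
    card_commutator_dvd_of_index_center_dvd
      ((index_center_quotient_commutatorHom_range_dvd hu).trans hm)

theorem card_commutator_dvd_of_central_extension {m : ℕ} {E Q : Type*} [Group E] [Group Q]
    {π : E →* Q} (hπ : Function.Surjective π) (hker : π.ker ≤ center E) {z : Q}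
    (hz : z ∈ center Q) (hm : (zpowers z).index ∣ p ^ m) :
    Nat.card (commutator E) ∣ p ^ (m + 1).choose 2 := by
  obtain ⟨u, rfl⟩ := hπ z
  refine card_commutator_dvd_of_index_zpowers_sup_center_dvd (u := u) (fun g ↦ hker ?_) ?_
  · rw [MonoidHom.mem_ker, map_commutatorElement]
    exact commutatorElement_eq_one_iff_mul_comm.mpr (mem_center_iff.mp hz _)
  · rw [← index_zpowers_sup_ker hπ] at hm
    exact (index_dvd_of_le (sup_le_sup_left hker _)).trans hm

end PrimePowerIndex

section SchurMultiplier

variable (G : Type u) [Group G]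

instance presentationKernel_normal : (presentationKernel G).Normal :=
  MonoidHom.normal_ker _

/-- The central extension `F ⧸ ⁅F, R⁆` of `G` obtained from the canonical free presentation
`G ≅ F ⧸ R`. It serves to read off `|M(G)|` from the order of its derived subgroup. -/
abbrev FreeCentralExtension : Type u :=
  FreeGroup G ⧸ ⁅(⊤ : Subgroup (FreeGroup G)), presentationKernel G⁆

namespace FreeCentralExtension

/-- The projection `F ⧸ ⁅F, R⁆ → F ⧸ R ≅ G`. -/
def proj : FreeCentralExtension G →* G :=
  QuotientGroup.lift _ (FreeGroup.lift id) (commutator_le_right _ (presentationKernel G))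

theorem proj_surjective : Function.Surjective (proj G) :=
  fun g ↦ ⟨(FreeGroup.of g : FreeGroup G), FreeGroup.lift_apply_of⟩

theorem ker_proj_le_center : (proj G).ker ≤ center (FreeCentralExtension G) := by
  intro x hx
  obtain ⟨r, rfl⟩ := QuotientGroup.mk_surjective x
  exact quotient_mk_mem_center_iff.mpr fun g ↦ commutator_mem_commutator (mem_top g) hx

theorem card_commutator :
    Nat.card (commutator (FreeCentralExtension G)) =
      Nat.card (SchurMultiplier G) * Nat.card (commutator G) := by
  have hsurj : Function.Surjective (FreeGroup.lift (id : G → G)) :=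
    fun g ↦ ⟨FreeGroup.of g, FreeGroup.lift_apply_of⟩
  have hle : ⁅⊤, presentationKernel G⁆ ≤ presentationKernel G ⊓ commutator (FreeGroup G) :=
    le_inf (commutator_le_right _ _) (commutator_mono le_rfl le_top)
  have hM : Nat.card (SchurMultiplier G) = ⁅⊤, presentationKernel G⁆.relIndex
      (presentationKernel G ⊓ commutator (FreeGroup G)) :=
    rfl
  have hG' : (presentationKernel G).relIndex (commutator (FreeGroup G)) =
      Nat.card (commutator G) :=
    ker_relIndex_commutator hsurj
  rw [hM, ← hG', ← inf_relIndex_right (presentationKernel G),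
    relIndex_mul_relIndex _ _ _ hle inf_le_right, relIndex_commutator_eq_card_commutator_quotient]

end FreeCentralExtension

variable {G} {p : ℕ} [Fact p.Prime]

theorem card_schurMultiplier_mul_card_commutator_dvd {m : ℕ} {z : G} (hz : z ∈ center G)
    (hm : (zpowers z).index ∣ p ^ m) :
    Nat.card (SchurMultiplier G) * Nat.card (commutator G) ∣ p ^ (m + 1).choose 2 :=
  FreeCentralExtension.card_commutator G ▸ card_commutator_dvd_of_central_extension
    (FreeCentralExtension.proj_surjective G) (FreeCentralExtension.ker_proj_le_center G) hz hm

end SchurMultiplier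

/-- The `+ 1` cannot be cancelled against the truncated `- 1`, since `n ≤ 2` is allowed. -/
theorem choose_two_sub_two_lt (n : ℕ) :
    (n - 2).choose 2 < (n - 1) * (n - 2) / 2 - 1 + 1 := by
  rw [show n - 2 = n - 1 - 1 by omega, ← Nat.choose_two_right]
  rcases n - 1 with _ | _ | i
  · simp
  · simp
  · rw [Nat.add_sub_cancel, Nat.choose_succ_succ' (i + 1) 1, Nat.choose_one_right,
      one_add_one_eq_two]
    omega

theorem center_exponent_le_p_sq_of_s_eq_two_general {p n k : ℕ} (hp : p.Prime) {G : Type*}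
    [Group G] (hG : Nat.card G = p ^ n)
    (hM : p ^ (n - k).choose 2 < Nat.card (SchurMultiplier G) * Nat.card (commutator G)) :
    ∀ z ∈ center G, z ^ p ^ k = 1 := by
  intro z hz
  have : Fact p.Prime := ⟨hp⟩
  obtain ⟨j, hjn, hj⟩ := (Nat.dvd_prime_pow hp).mp (hG ▸ orderOf_dvd_natCard z)
  rw [← orderOf_dvd_iff_pow_eq_one, hj]
  refine pow_dvd_pow p (not_lt.mp fun hkj ↦ hM.not_ge ?_)
  calc Nat.card (SchurMultiplier G) * Nat.card (commutator G)
      ≤ p ^ (n - j + 1).choose 2 :=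
        Nat.le_of_dvd (pow_pos hp.pos _) <| card_schurMultiplier_mul_card_commutator_dvd hz
          (index_zpowers_eq_pow_sub hp.pos hG hj hjn).dvd
    _ ≤ p ^ (n - k).choose 2 :=
        Nat.pow_le_pow_right hp.pos (Nat.choose_le_choose 2 (by omega))

/-- **Lemma 3, first case.** If `G` is a `p`-group of order `p^n` with `|G'| = p` and
`|M(G)| = p^((n-1)(n-2)/2 - 1)`, then the center of `G` has exponent at most `p^2`. -/
theorem center_exponent_le_p_sq_of_s_eq_two {p n : ℕ} (hp : p.Prime)
    {G : Type*} [Group G] (hG : Nat.card G = p ^ n)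
    (hG' : Nat.card (commutator G) = p)
    (hM : Nat.card (SchurMultiplier G) = p ^ ((n - 1) * (n - 2) / 2 - 1)) :
    ∀ z ∈ Subgroup.center G, z ^ p ^ 2 = 1 := by
  refine center_exponent_le_p_sq_of_s_eq_two_general hp hG ?_
  rw [hM, hG', ← pow_succ]
  exact Nat.pow_lt_pow_right hp.one_lt (choose_two_sub_two_lt n)
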